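/- arXiv:2211.04554 — 2 statements merged into one kernel-verified Lean document; each statement's English description precedes it below -/
import Mathlib

section
/- Let Γ be a countable discrete group, μ a probability measure on Γ, X a compact metrizable space with a continuous Γ-action, and ν a μ-stationary Borel probability measure on X. Then for μ^{⊗ℕ}-almost every sequence γ = (g_1, g_2, …) ∈ Γ^ℕ (with respect to the infinite product measure μ^{⊗ℕ}), the sequence of pushforward measures (g_1 g_2 ⋯ g_n)_* ν converges, as n → ∞, in the weak-* topology on Borel probability measures on X to a limit ν_γ, and the almost-everywhere defined map γ ↦ ν_γ from Γ^ℕ to the space of Borel probability measures on X is measurable. -/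
open MeasureTheory Filter Topology

/-!
For a continuous function `f` on `X`, stationarity of `ν` says that `φ_f g = ∫ f (g • x) ∂ν` is
harmonic for right multiplication by `μ`-distributed elements. Hence `φ_f (g₁ ⋯ gₙ)`, which is the
integral of `f` against `(g₁ ⋯ gₙ)_* ν`, is a bounded martingale and converges almost surely.
Running `f` through a countable dense subset of `C(X, ℝ)` embeds the compact space of probability
measures on `X` as a closed subset of `ℝ^ℕ`, so that almost sure convergence of all these
integrals is convergence of the measures.
-/

open ProbabilityTheory TopologicalSpace

section Freezing

variable {Ω α β E : Type*} {m mΩ : MeasurableSpace Ω} [MeasurableSpace α] [mβ : MeasurableSpace β]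
  {P : Measure Ω} [IsFiniteMeasure P] {Y : Ω → α} {Z : Ω → β}

theorem map_restrict_prodMk_eq_prod_of_indep (hm : m ≤ mΩ) (hY : Measurable[m] Y)
    (hZ : Measurable Z) (hind : Indep m (mβ.comap Z) P) {s : Set Ω} (hs : MeasurableSet[m] s) :
    (P.restrict s).map (fun ω => (Y ω, Z ω)) = ((P.restrict s).map Y).prod (P.map Z) := by
  have hY' : Measurable Y := hY.mono hm le_rfl
  refine (Measure.prod_eq fun A B hA hB => ?_).symm
  calc (P.restrict s).map (fun ω => (Y ω, Z ω)) (A ×ˢ B)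
      = P ((Y ⁻¹' A ∩ s) ∩ Z ⁻¹' B) := by
        rw [Measure.map_apply (hY'.prodMk hZ) (hA.prod hB), Measure.restrict_apply' (hm s hs),
          Set.mk_preimage_prod, Set.inter_right_comm]
    _ = P (Y ⁻¹' A ∩ s) * P (Z ⁻¹' B) :=
        (Indep_iff _ _ _).1 hind _ _ ((hY hA).inter hs) ⟨B, hB, rfl⟩
    _ = (P.restrict s).map Y A * P.map Z B := by
        rw [Measure.map_apply hY' hA, Measure.restrict_apply' (hm s hs), Measure.map_apply hZ hB]

variable [NormedAddCommGroup E] [NormedSpace ℝ E] [CompleteSpace E]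

theorem condExp_comp_prodMk_of_indep (hm : m ≤ mΩ) (hY : Measurable[m] Y) (hZ : Measurable Z)
    (hind : Indep m (mβ.comap Z) P) {f : α × β → E} (hf : StronglyMeasurable f)
    (hint : Integrable (fun ω => f (Y ω, Z ω)) P) :
    P[fun ω => f (Y ω, Z ω) | m] =ᵐ[P] fun ω => ∫ z, f (Y ω, z) ∂(P.map Z) := by
  have hY' : Measurable Y := hY.mono hm le_rfl
  have hlaw {s : Set Ω} (hs : MeasurableSet[m] s) :=
    map_restrict_prodMk_eq_prod_of_indep hm hY hZ hind hs
  have hsm : StronglyMeasurable fun y => ∫ z, f (y, z) ∂(P.map Z) := hf.integral_prod_right'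
  have hfprod {s : Set Ω} (hs : MeasurableSet[m] s) :
      Integrable f (((P.restrict s).map Y).prod (P.map Z)) := by
    rw [← hlaw hs, integrable_map_measure hf.aestronglyMeasurable (hY'.prodMk hZ).aemeasurable]
    exact hint.integrableOn
  refine (ae_eq_condExp_of_forall_setIntegral_eq hm hint (fun s hs _ => ?_) (fun s hs _ => ?_)
    (hsm.comp_measurable hY).aestronglyMeasurable).symm
  · exact (integrable_map_measure hsm.aestronglyMeasurable hY'.aemeasurable).1
      (hfprod hs).integral_prod_left
  · calc ∫ ω in s, ∫ z, f (Y ω, z) ∂(P.map Z) ∂P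
        = ∫ y, ∫ z, f (y, z) ∂(P.map Z) ∂((P.restrict s).map Y) :=
          (integral_map hY'.aemeasurable hsm.aestronglyMeasurable).symm
      _ = ∫ p, f p ∂(((P.restrict s).map Y).prod (P.map Z)) :=
          (integral_prod f (hfprod hs)).symm
      _ = ∫ ω in s, f (Y ω, Z ω) ∂P := by
          rw [← hlaw hs, integral_map (hY'.prodMk hZ).aemeasurable hf.aestronglyMeasurable]

end Freezing

section RandomWalk

variable {Γ : Type*} [Monoid Γ]

/-- The position `γ 0 * γ 1 * ⋯ * γ (n - 1)` at time `n` of the right random walk with increments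
`γ`, started at `1`. -/
def rightWalk (γ : ℕ → Γ) (n : ℕ) : Γ := ((List.range n).map γ).prod

theorem rightWalk_succ (γ : ℕ → Γ) (n : ℕ) : rightWalk γ (n + 1) = rightWalk γ n * γ n := by
  simp [rightWalk, List.range_succ]

variable [MeasurableSpace Γ]

/-- A function `φ` on a monoid is right `μ`-harmonic if its value at each `h` is its mean over one
step `h ↦ h * g` of the right random walk with step distribution `μ`. -/
def IsRightHarmonic (μ : Measure Γ) (φ : Γ → ℝ) : Prop :=
  ∀ h, ∫ g, φ (h * g) ∂μ = φ h

variable [MeasurableMul₂ Γ]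

theorem measurable_rightWalk {m : MeasurableSpace (ℕ → Γ)} {n : ℕ}
    (hm : ∀ i < n, Measurable[m] fun γ : ℕ → Γ => γ i) :
    Measurable[m] fun γ : ℕ → Γ => rightWalk γ n := by
  induction n with
  | zero => simp [rightWalk]
  | succ n ih =>
    simp only [rightWalk_succ]
    exact (ih fun i hi => hm i (hi.trans n.lt_succ_self)).mul (hm n n.lt_succ_self)

end RandomWalk

section Filtration

variable {ι : Type*} {X : ι → Type*} [mX : ∀ i, MeasurableSpace (X i)]

theorem measurable_eval_piLE [Preorder ι] {i n : ι} (hi : i ≤ n) :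
    Measurable[Filtration.piLE (X := X) n] fun γ : ∀ i, X i => γ i :=
  (measurable_pi_apply (⟨i, hi⟩ : Set.Iic n)).comp (comap_measurable (Preorder.restrictLe n))

theorem indep_piLE_comap_eval_infinitePi [PartialOrder ι] [LocallyFiniteOrderBot ι]
    (μ : ∀ i, Measure (X i)) [∀ i, IsProbabilityMeasure (μ i)] {n k : ι} (hnk : ¬k ≤ n) :
    Indep (Filtration.piLE (X := X) n) ((mX k).comap fun γ : ∀ i, X i => γ k)
      (Measure.infinitePi μ) := by
  have hcoord : iIndepFun (fun i (γ : ∀ i, X i) => γ i) (Measure.infinitePi μ) :=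
    iIndepFun_infinitePi (X := fun _ x => x) fun _ => measurable_id
  have hdisj : Disjoint (Finset.Iic n) {k} := by simpa using hnk
  rw [Filtration.piLE_eq_comap_frestrictLe]
  exact (hcoord.indepFun_finset _ _ hdisj measurable_pi_apply).comp measurable_id
    (measurable_pi_apply (⟨k, Finset.mem_singleton_self k⟩ : ({k} : Finset ι)))

end Filtration

namespace IsRightHarmonic

variable {Γ : Type*} [Monoid Γ] [MeasurableSpace Γ] [MeasurableMul₂ Γ]
  {μ : Measure Γ} [IsProbabilityMeasure μ] {φ : Γ → ℝ} {C : ℝ}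

theorem martingale (hφ : IsRightHarmonic μ φ) (hmeas : Measurable φ) (hC : ∀ g, ‖φ g‖ ≤ C) :
    Martingale (fun n (γ : ℕ → Γ) => φ (rightWalk γ (n + 1))) Filtration.piLE
      (Measure.infinitePi fun _ : ℕ => μ) := by
  have hwalk (n : ℕ) : Measurable[Filtration.piLE n] fun γ : ℕ → Γ => rightWalk γ (n + 1) :=
    measurable_rightWalk fun i hi => measurable_eval_piLE (Nat.lt_succ_iff.1 hi)
  have hadapted (n : ℕ) := hmeas.comp (hwalk n)
  have hint (n : ℕ) : Integrable (fun γ : ℕ → Γ => φ (rightWalk γ (n + 1)))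
      (Measure.infinitePi fun _ : ℕ => μ) :=
    .of_bound ((hadapted n).mono (Filtration.piLE.le n) le_rfl).aestronglyMeasurable C
      (ae_of_all _ fun γ => hC _)
  refine martingale_nat (fun n => (hadapted n).stronglyMeasurable) hint fun n => ?_
  have hfreeze := condExp_comp_prodMk_of_indep (Filtration.piLE.le n) (hwalk n)
    (measurable_pi_apply (n + 1)) (indep_piLE_comap_eval_infinitePi (fun _ => μ) n.not_succ_le_self)
    (hmeas.comp measurable_mul).stronglyMeasurable
    ((hint (n + 1)).congr (ae_of_all _ fun γ => by simp [rightWalk_succ γ (n + 1)]))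
  simpa [rightWalk_succ _ (n + 1), Measure.infinitePi_map_eval, hφ _] using hfreeze.symm

theorem ae_exists_tendsto_rightWalk (hφ : IsRightHarmonic μ φ) (hmeas : Measurable φ)
    (hC : ∀ g, ‖φ g‖ ≤ C) :
    ∀ᵐ γ ∂(Measure.infinitePi fun _ : ℕ => μ),
      ∃ c, Tendsto (fun n => φ (rightWalk γ n)) atTop (𝓝 c) := by
  have hbdd (n : ℕ) : eLpNorm (fun γ : ℕ → Γ => φ (rightWalk γ (n + 1))) 1
      (Measure.infinitePi fun _ : ℕ => μ) ≤ C.toNNReal :=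
    (eLpNorm_le_of_ae_bound (ae_of_all _ fun γ => hC _)).trans (by simp [ENNReal.ofReal])
  filter_upwards [(hφ.martingale hmeas hC).submartingale.exists_ae_tendsto_of_bdd hbdd]
    with γ ⟨c, hc⟩
  exact ⟨c, (tendsto_add_atTop_iff_nat 1).1 hc⟩

end IsRightHarmonic

section Stationary

variable {Γ X : Type*} [MeasurableSpace X]

/-- A measure `ν` is `μ`-stationary if `μ * ν = ν`. The convolution `μ * ν` is encoded as the image
of `μ ⊗ ν` under the action, which for countable `Γ` is `∑ g, μ {g} • g_* ν`. -/
def IsStationaryMeasure [MeasurableSpace Γ] [SMul Γ X] (μ : Measure Γ) (ν : Measure X) : Prop :=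
  (μ.prod ν).map (fun p => p.1 • p.2) = ν

/-- The Poisson transform `g ↦ ∫ f (g • x) ∂ν` of a function `f` on `X`. Its value at `g` is the
integral of `f` against the translate `g_* ν`. -/
noncomputable def poissonTransform [SMul Γ X] (ν : Measure X) (f : X → ℝ) (g : Γ) : ℝ :=
  ∫ x, f (g • x) ∂ν

theorem norm_poissonTransform_le [SMul Γ X] (ν : Measure X) [IsProbabilityMeasure ν] {f : X → ℝ}
    {C : ℝ} (hC : ∀ x, ‖f x‖ ≤ C) (g : Γ) : ‖poissonTransform ν f g‖ ≤ C := by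
  simpa [poissonTransform] using
    norm_integral_le_of_norm_le_const (μ := ν) (ae_of_all _ fun x => hC (g • x))

variable [MeasurableSpace Γ]

theorem map_smul_prod_eq_sum [Countable Γ] [MeasurableSingletonClass Γ] [SMul Γ X]
    [MeasurableSMul₂ Γ X] (μ : Measure Γ) (ν : Measure X) [SFinite ν] :
    (μ.prod ν).map (fun p => p.1 • p.2)
      = Measure.sum fun g => μ {g} • ν.map fun x => g • x := by
  have hsmul : Measurable fun p : Γ × X => p.1 • p.2 := measurable_smul
  conv_lhs => rw [← Measure.sum_smul_dirac μ]
  rw [Measure.prod_sum_left, Measure.map_sum hsmul.aemeasurable]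
  congr with g : 1
  rw [Measure.prod_smul_left, Measure.map_smul, Measure.dirac_prod,
    Measure.map_map hsmul measurable_prodMk_left, Function.comp_def]

theorem measurable_poissonTransform [SMul Γ X] [MeasurableSMul₂ Γ X] (ν : Measure X) [SFinite ν]
    {f : X → ℝ} (hf : Measurable f) : Measurable (poissonTransform (Γ := Γ) ν f) :=
  (hf.comp measurable_smul).stronglyMeasurable.integral_prod_right'.measurable

theorem IsStationaryMeasure.isRightHarmonic_poissonTransform [Monoid Γ] [MulAction Γ X]
    [MeasurableSMul₂ Γ X] {μ : Measure Γ} [IsFiniteMeasure μ] {ν : Measure X} [IsFiniteMeasure ν]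
    (hν : IsStationaryMeasure μ ν) {f : X → ℝ} (hf : Measurable f) {C : ℝ} (hC : ∀ x, ‖f x‖ ≤ C) :
    IsRightHarmonic μ (poissonTransform ν f) := by
  intro h
  have hsmul : Measurable fun p : Γ × X => p.1 • p.2 := measurable_smul
  have hfh : Measurable fun x => f (h • x) := hf.comp (measurable_const_smul h)
  calc ∫ g, ∫ x, f ((h * g) • x) ∂ν ∂μ
      = ∫ g, ∫ x, f (h • g • x) ∂ν ∂μ := by simp only [mul_smul]
    _ = ∫ p, f (h • p.1 • p.2) ∂(μ.prod ν) :=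
        integral_integral (.of_bound (hfh.comp hsmul).aestronglyMeasurable C
          (ae_of_all _ fun p => hC _))
    _ = ∫ x, f (h • x) ∂((μ.prod ν).map fun p => p.1 • p.2) :=
        (integral_map hsmul.aemeasurable hfh.aestronglyMeasurable).symm
    _ = ∫ x, f (h • x) ∂ν := by rw [hν]

end Stationary

section WeakConvergence

variable {X : Type*} [TopologicalSpace X] [CompactSpace X] [MeasurableSpace X] [BorelSpace X]

theorem continuous_integral_of_compactSpace (ρ : Measure X) [IsFiniteMeasure ρ] :
    Continuous fun f : C(X, ℝ) => ∫ x, f x ∂ρ :=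
  (continuous_integral.comp (ContinuousMap.toLp 1 ρ ℝ).continuous).congr fun f =>
    integral_congr_ae (ContinuousMap.coeFn_toLp ρ f)

variable [T2Space X] [HasOuterApproxClosed X] {ι : Type*} {d : ι → C(X, ℝ)}

theorem isClosedEmbedding_integral_of_denseRange (hd : DenseRange d) :
    IsClosedEmbedding fun (ρ : ProbabilityMeasure X) i => ∫ x, d i x ∂(ρ : Measure X) := by
  refine Continuous.isClosedEmbedding
    (continuous_pi fun i => ProbabilityMeasure.continuous_integral_continuousMap (d i))
    fun ρ σ h => ProbabilityMeasure.toMeasure_injective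
      (ext_of_forall_integral_eq_of_IsFiniteMeasure fun f => ?_)
  exact congrFun (hd.equalizer (continuous_integral_of_compactSpace (ρ : Measure X))
    (continuous_integral_of_compactSpace (σ : Measure X)) h) f.toContinuousMap

theorem exists_tendsto_of_forall_tendsto_integral (hd : DenseRange d) {α : Type*} {l : Filter α}
    [l.NeBot] {ρ : α → ProbabilityMeasure X}
    (h : ∀ i, ∃ c, Tendsto (fun a => ∫ x, d i x ∂(ρ a : Measure X)) l (𝓝 c)) :
    ∃ σ, Tendsto ρ l (𝓝 σ) := by
  have hemb := isClosedEmbedding_integral_of_denseRange hd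
  choose c hc using h
  have hlim := tendsto_pi_nhds.2 hc
  obtain ⟨σ, rfl⟩ :=
    hemb.isClosed_range.mem_of_tendsto hlim (Eventually.of_forall fun a => ⟨ρ a, rfl⟩)
  exact ⟨σ, hemb.tendsto_nhds_iff.2 hlim⟩

end WeakConvergence

section Metrizable

variable {X : Type*} [TopologicalSpace X] [CompactSpace X] [MetrizableSpace X]
  [MeasurableSpace X] [BorelSpace X]

theorem measurable_borel_of_forall_measurable_integral {α : Type*} [MeasurableSpace α]
    {ρ : α → ProbabilityMeasure X}
    (h : ∀ f : C(X, ℝ), Measurable fun a => ∫ x, f x ∂(ρ a : Measure X)) :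
    Measurable[_, borel (ProbabilityMeasure X)] ρ := by
  let _ : MeasurableSpace (ProbabilityMeasure X) := borel _
  have : BorelSpace (ProbabilityMeasure X) := ⟨rfl⟩
  exact (isClosedEmbedding_integral_of_denseRange
    (denseRange_denseSeq C(X, ℝ))).measurableEmbedding.measurable_comp_iff.1
      (measurable_pi_lambda _ fun k => h (denseSeq C(X, ℝ) k))

theorem exists_measurable_borel_tendsto_of_ae_exists_tendsto {Ω : Type*} [MeasurableSpace Ω]
    {P : Measure Ω} {ρ : ℕ → Ω → ProbabilityMeasure X}
    (hmeas : ∀ n (f : C(X, ℝ)), Measurable fun ω => ∫ x, f x ∂(ρ n ω : Measure X))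
    (htendsto : ∀ f : C(X, ℝ), ∀ᵐ ω ∂P,
      ∃ c, Tendsto (fun n => ∫ x, f x ∂(ρ n ω : Measure X)) atTop (𝓝 c)) :
    ∃ L : Ω → ProbabilityMeasure X, Measurable[_, borel (ProbabilityMeasure X)] L ∧
      ∀ᵐ ω ∂P, Tendsto (fun n => ρ n ω) atTop (𝓝 (L ω)) := by
  let _ : MeasurableSpace (ProbabilityMeasure X) := borel _
  have : BorelSpace (ProbabilityMeasure X) := ⟨rfl⟩
  refine measurable_limit_of_tendsto_metrizable_ae
    (fun n => (measurable_borel_of_forall_measurable_integral (hmeas n)).aemeasurable) ?_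
  filter_upwards [ae_all_iff.2 fun k => htendsto (denseSeq C(X, ℝ) k)] with ω hω
  exact exists_tendsto_of_forall_tendsto_integral (denseRange_denseSeq C(X, ℝ)) hω

end Metrizable

theorem integral_map_smul_eq_poissonTransform {Γ X : Type*} [TopologicalSpace X]
    [MeasurableSpace X] [OpensMeasurableSpace X] [SMul Γ X] [MeasurableConstSMul Γ X]
    (ν : Measure X) (f : C(X, ℝ)) (g : Γ) :
    ∫ x, f x ∂(ν.map fun x => g • x) = poissonTransform ν f g :=
  integral_map (measurable_const_smul g).aemeasurable f.continuous.aestronglyMeasurable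

theorem furstenberg_boundary_limit_measures_general
    {Γ : Type*} [Monoid Γ] [MeasurableSpace Γ] [MeasurableMul₂ Γ]
    (μ : Measure Γ) [IsProbabilityMeasure μ]
    {X : Type*} [TopologicalSpace X] [CompactSpace X] [MetrizableSpace X]
    [MeasurableSpace X] [BorelSpace X] [MulAction Γ X] [MeasurableSMul₂ Γ X]
    (ν : ProbabilityMeasure X) (hν : IsStationaryMeasure μ (ν : Measure X)) :
    ∃ L : (ℕ → Γ) → ProbabilityMeasure X,
      Measurable[_, borel (ProbabilityMeasure X)] L ∧
      ∀ᵐ γ ∂(Measure.infinitePi fun _ : ℕ => μ),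
        Tendsto
          (fun n => ν.map (f := fun x => rightWalk γ n • x)
            (measurable_const_smul _).aemeasurable)
          atTop (𝓝 (L γ)) := by
  refine exists_measurable_borel_tendsto_of_ae_exists_tendsto (fun n f => ?_) fun f => ?_
  all_goals
    simp only [ProbabilityMeasure.toMeasure_map, integral_map_smul_eq_poissonTransform]
  · exact (measurable_poissonTransform _ f.continuous.measurable).comp
      (measurable_rightWalk fun i _ => measurable_pi_apply i)
  · exact (hν.isRightHarmonic_poissonTransform f.continuous.measurable
      f.norm_coe_le_norm).ae_exists_tendsto_rightWalk
        (measurable_poissonTransform _ f.continuous.measurable)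
        (norm_poissonTransform_le _ f.norm_coe_le_norm)

theorem measurableSMul₂_of_countable {Γ X : Type*} [Countable Γ] [MeasurableSpace Γ]
    [MeasurableSingletonClass Γ] [MeasurableSpace X] [SMul Γ X]
    (h : ∀ g : Γ, Measurable fun x : X => g • x) : MeasurableSMul₂ Γ X :=
  ⟨measurable_from_prod_countable_right h⟩

theorem eq_infinitePi_of_cylinders {X : ℕ → Type*} [∀ i, Countable (X i)]
    [∀ i, MeasurableSpace (X i)] [∀ i, MeasurableSingletonClass (X i)]
    (μ : ∀ i, Measure (X i)) [∀ i, IsProbabilityMeasure (μ i)] {P : Measure (∀ i, X i)}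
    (hP : ∀ (n : ℕ) (x : ∀ i : Fin n, X i),
      P {y | ∀ i : Fin n, y i = x i} = ∏ i : Fin n, μ i {x i}) :
    P = Measure.infinitePi μ := by
  refine IsProjectiveLimit.unique ((isProjectiveLimit_nat_iff
    (isProjectiveMeasureFamily_pi μ) P).2 fun n => ?_) (Measure.isProjectiveLimit_infinitePi μ)
  let e : Fin (n + 1) ≃ Finset.Iic n :=
    Fin.equivSubtype.trans (Equiv.subtypeEquivRight fun i => by simp)
  refine Measure.ext_of_singleton fun x => ?_
  have hcyl : Preorder.frestrictLe n ⁻¹' {x} = {y | ∀ i : Fin (n + 1), y i = x (e i)} := by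
    ext y
    exact funext_iff.trans e.forall_congr_right.symm
  calc P.map (Preorder.frestrictLe n) {x}
      = P {y | ∀ i : Fin (n + 1), y i = x (e i)} :=
        (Measure.map_apply (by fun_prop) (measurableSet_singleton x)).trans (congrArg P hcyl)
    _ = ∏ i : Fin (n + 1), μ (e i) {x (e i)} := hP (n + 1) fun i => x (e i)
    _ = ∏ i : Finset.Iic n, μ i {x i} := e.prod_comp fun i => μ i {x i}
    _ = Measure.pi (fun i : Finset.Iic n => μ i) {x} := (Measure.pi_singleton _ x).symm

/-- **Furstenberg's lemma.** Let `Γ` be a countable discrete group, `μ` a probability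
measure on `Γ`, `X` a compact metrizable space with a continuous `Γ`-action, and `ν` a
`μ`-stationary Borel probability measure on `X`.  Then for `μ^⊗ℕ`-almost every sequence
`γ = (g₁, g₂, …) ∈ Γ^ℕ` (`P` below denotes the infinite product measure `μ^⊗ℕ`,
characterized by its values on cylinder sets), the pushforward measures
`(g₁ g₂ ⋯ gₙ)_* ν` converge in the weak-* topology to a limit `ν_γ = L γ`, and the map
`γ ↦ ν_γ` is (Borel) measurable. -/
theorem furstenberg_boundary_limit_measures
    {Γ : Type*} [Group Γ] [Countable Γ] [MeasurableSpace Γ] [MeasurableSingletonClass Γ]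
    (μ : Measure Γ) [IsProbabilityMeasure μ]
    {X : Type*} [TopologicalSpace X] [CompactSpace X] [TopologicalSpace.MetrizableSpace X]
    [MeasurableSpace X] [BorelSpace X]
    [MulAction Γ X] (hcont : ∀ g : Γ, Continuous (fun x : X => g • x))
    (ν : ProbabilityMeasure X)
    (hstat : Measure.sum (fun g : Γ => μ {g} • (ν : Measure X).map (fun x => g • x))
      = (ν : Measure X))
    -- `P` is the infinite product measure `μ^{⊗ℕ}` on `Γ^ℕ`, characterized by its
    -- values on cylinder sets:
    (P : Measure (ℕ → Γ)) [IsProbabilityMeasure P]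
    (hP : ∀ (n : ℕ) (g : Fin n → Γ),
      P {γ : ℕ → Γ | ∀ i : Fin n, γ (i : ℕ) = g i} = ∏ i : Fin n, μ {g i}) :
    ∃ L : (ℕ → Γ) → ProbabilityMeasure X,
      (Measurable[_, borel (ProbabilityMeasure X)] L) ∧
      ∀ᵐ γ ∂P,
        Tendsto
          (fun n : ℕ =>
            ν.map (f := fun x : X => ((List.range n).map γ).prod • x)
              ((hcont _).measurable.aemeasurable))
          atTop (𝓝 (L γ)) := by
  have : MeasurableSMul₂ Γ X := measurableSMul₂_of_countable fun g => (hcont g).measurable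
  obtain rfl := eq_infinitePi_of_cylinders (fun _ => μ) hP
  exact furstenberg_boundary_limit_measures_general μ ν ((map_smul_prod_eq_sum μ _).trans hstat)
end

section
/- Let d ≥ 2, let F_d be the free group of rank d, and let μ be the uniform probability measure on a symmetric free generating set {a_1^{±1}, …, a_d^{±1}}. Then there is a sequence (N_i)_{i∈ℕ} of pairwise distinct nontrivial normal subgroups of F_d such that, writing μ_i for the pushforward of μ to the quotient F_d/N_i, for every ε > 0 there exists i with h_RW(μ) > h_RW(μ_i) > ((d−2)/(2d−2)) · h_RW(μ) − ε, where h_RW denotes the Avez entropy (and h_RW(μ) = ((d−1)/d) log(2d−1)). -/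
open MeasureTheory Filter Topology

/-- Convolution powers of a probability measure on a discrete group:
`convPow μ 0 = δ_e` and `convPow μ (n+1) {g} = ∑_h μ {h} * convPow μ n {h⁻¹ g}`. -/
noncomputable def convPow {Γ : Type*} [Group Γ] [MeasurableSpace Γ]
    (μ : Measure Γ) : ℕ → Measure Γ
  | 0 => Measure.dirac 1
  | n + 1 => (μ.prod (convPow μ n)).map (fun p => p.1 * p.2)

/-- The Shannon entropy `H(ν) = ∑_g −ν({g}) log ν({g})` of a (finitely supported)
measure on a countable discrete space. -/
noncomputable def shannonEntropy {Γ : Type*} [MeasurableSpace Γ] (ν : Measure Γ) : ℝ :=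
  ∑' g : Γ, -((ν {g}).toReal * Real.log (ν {g}).toReal)

/-- The Shannon entropy of the `n`-th convolution power of the pushforward of `μ` to the
quotient group `G ⧸ N` (with the discrete σ-algebra on the quotient). -/
noncomputable def quotientWalkEntropy {G : Type*} [Group G] [MeasurableSpace G]
    (μ : Measure G) (N : Subgroup G) (hN : N.Normal) (n : ℕ) : ℝ :=
  letI := hN
  letI : MeasurableSpace (G ⧸ N) := ⊤
  shannonEntropy (convPow (μ.map (QuotientGroup.mk : G → G ⧸ N)) n)

/-!
Split off one generator: `N_i` is the kernel of the homomorphism `F_d → F_{d-1} × ℤ/(i+1)` which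
kills `a₀` in the free factor and remembers its exponent modulo `i + 1`. A finite factor adds at
most a constant to the entropy, so every quotient walk has the Avez entropy of the lazy simple
random walk on `F_k`, `k = d - 1`. That walk is controlled by its word length, whose drift is at
least `(k - 1) / (k + 1)` and at most `k / (k + 1)`.

For the lower bound, `x ↦ (2k - 1)^(-|x|)` is superharmonic and equals `1` at the identity, hence
dominates the law of the walk at every time, and the entropy is at least
`log (2k - 1)` times the expected length. For the upper bound, Gibbs' inequality compares the law at
time `n` with the subprobability `(2k)^(-|x|) / (n + 1)` on the ball of radius `n`.
-/

open scoped BigOperators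

section UniformSpace

variable {Ω Ω' α β : Type*} [Fintype Ω] [Fintype Ω']

/-- The probability that `X = a` when `ω` is uniform on `Ω`: the law of `X` as a real mass
function. -/
noncomputable def lawMass (X : Ω → α) (a : α) : ℝ :=
  𝔼 ω, ({a} : Set α).indicator 1 (X ω)

/-- The Shannon entropy of the law of `X` for uniform `ω`, written as the expected surprisal
`𝔼[-log P(X)]`. -/
noncomputable def lawEntropy (X : Ω → α) : ℝ :=
  𝔼 ω, -Real.log (lawMass X (X ω))

lemma lawMass_apply_pos (X : Ω → α) (ω : Ω) : 0 < lawMass X (X ω) :=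
  Finset.expect_pos' (fun _ _ => Set.indicator_nonneg (fun _ _ => zero_le_one) _)
    ⟨ω, Finset.mem_univ _, by simp⟩

lemma lawMass_le_one (X : Ω → α) (a : α) : lawMass X a ≤ 1 := by
  rcases isEmpty_or_nonempty Ω with _ | _
  · simp [lawMass]
  · exact Finset.expect_le Finset.univ_nonempty fun _ _ =>
      Set.indicator_le_self' (fun _ _ => zero_le_one) _

lemma expect_comp_eq_sum_lawMass_mul (X : Ω → α) {T : Finset α} (hX : ∀ ω, X ω ∈ T)
    (f : α → ℝ) : 𝔼 ω, f (X ω) = ∑ a ∈ T, lawMass X a * f a := by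
  classical
  simp_rw [lawMass, Finset.expect_mul, ← Finset.expect_sum_comm, Set.indicator_apply,
    Set.mem_singleton_iff, Pi.one_apply, ite_mul, one_mul, zero_mul, Finset.sum_ite_eq, hX, if_true]

lemma lawMass_comp_equiv (e : Ω ≃ Ω') (X : Ω' → α) (a : α) :
    lawMass (X ∘ e) a = lawMass X a :=
  Fintype.expect_equiv e _ _ fun _ => rfl

lemma lawEntropy_comp_equiv (e : Ω ≃ Ω') (X : Ω' → α) :
    lawEntropy (X ∘ e) = lawEntropy X :=
  Fintype.expect_equiv e _ _ fun ω => by rw [lawMass_comp_equiv, Function.comp_apply]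

lemma expect_neg_log_le_lawEntropy (X : Ω → α) {r : α → ℝ}
    (h : ∀ a, lawMass X a ≤ r a) : 𝔼 ω, -Real.log (r (X ω)) ≤ lawEntropy X :=
  Finset.expect_le_expect fun ω _ =>
    neg_le_neg (Real.log_le_log (lawMass_apply_pos X ω) (h _))

lemma lawEntropy_nonneg (X : Ω → α) : 0 ≤ lawEntropy X := by
  simpa using expect_neg_log_le_lawEntropy X (lawMass_le_one X)

lemma lawEntropy_le_expect_neg_log [Nonempty Ω] (X : Ω → α) {r : α → ℝ} {T : Finset α}
    (hX : ∀ ω, X ω ∈ T) (hr : ∀ a ∈ T, 0 < r a) (hsum : ∑ a ∈ T, r a ≤ 1) :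
    lawEntropy X ≤ 𝔼 ω, -Real.log (r (X ω)) := by
  have likelihood_ratio : 𝔼 ω, r (X ω) / lawMass X (X ω) ≤ 1 := by
    rw [expect_comp_eq_sum_lawMass_mul X hX fun a => r a / lawMass X a]
    refine (Finset.sum_le_sum fun a ha => ?_).trans hsum
    rw [mul_div_left_comm]
    exact mul_le_of_le_one_right (hr a ha).le (div_self_le_one _)
  calc lawEntropy X
      ≤ 𝔼 ω, (-Real.log (r (X ω)) + (r (X ω) / lawMass X (X ω) - 1)) := by
        refine Finset.expect_le_expect fun ω _ => ?_
        have hlog := Real.log_le_sub_one_of_pos (div_pos (hr _ (hX ω)) (lawMass_apply_pos X ω))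
        rw [Real.log_div (hr _ (hX ω)).ne' (lawMass_apply_pos X ω).ne'] at hlog
        linarith
    _ ≤ 𝔼 ω, -Real.log (r (X ω)) := by
        rw [Finset.expect_add_distrib, Finset.expect_sub_distrib, Fintype.expect_const]
        linarith

lemma lawMass_le_lawMass_comp (X : Ω → α) (f : α → β) (a : α) :
    lawMass X a ≤ lawMass (f ∘ X) (f a) := by
  classical
  refine Finset.expect_le_expect fun ω _ => ?_
  simp only [Set.indicator_apply, Set.mem_singleton_iff, Function.comp_apply, Pi.one_apply]
  split_ifs with hX hfX
  · rfl
  · exact absurd (congrArg f hX) hfX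
  · exact zero_le_one
  · rfl

lemma lawEntropy_comp_le (X : Ω → α) (f : α → β) : lawEntropy (f ∘ X) ≤ lawEntropy X :=
  expect_neg_log_le_lawEntropy X (lawMass_le_lawMass_comp X f)

lemma lawEntropy_comp_of_injective (X : Ω → α) {f : α → β} (hf : f.Injective) :
    lawEntropy (f ∘ X) = lawEntropy X := by
  classical
  simp only [lawEntropy, lawMass, Set.indicator_apply, Set.mem_singleton_iff, Function.comp_apply,
    hf.eq_iff, Pi.one_apply]

lemma lawMass_prodMap (X : Ω → α) (Y : Ω' → β) (a : α) (b : β) :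
    lawMass (Prod.map X Y) (a, b) = lawMass X a * lawMass Y b := by
  simp_rw [lawMass, Fintype.expect_mul_expect, ← Finset.univ_product_univ, Finset.expect_product,
   ← Set.singleton_prod_singleton, Prod.map_apply, Set.indicator_prod_one]

lemma lawEntropy_prodMap [Nonempty Ω] [Nonempty Ω'] (X : Ω → α) (Y : Ω' → β) :
    lawEntropy (Prod.map X Y) = lawEntropy X + lawEntropy Y := by
  have log_mass (p : Ω × Ω') : -Real.log (lawMass (Prod.map X Y) (Prod.map X Y p)) =
      -Real.log (lawMass X (X p.1)) + -Real.log (lawMass Y (Y p.2)) := by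
    rw [Prod.map_apply', lawMass_prodMap, Real.log_mul (lawMass_apply_pos X _).ne'
      (lawMass_apply_pos Y _).ne', neg_add]
  simp_rw [lawEntropy, log_mass, ← Finset.univ_product_univ, Finset.expect_product,
    Finset.expect_add_distrib, Fintype.expect_const]

lemma lawEntropy_le_lawEntropy_fst_add_log_card [Nonempty Ω] [Fintype β] (X : Ω → α × β) :
    lawEntropy X ≤ lawEntropy (Prod.fst ∘ X) + Real.log (Fintype.card β) := by
  classical
  have : Nonempty β := ‹Nonempty Ω›.map fun ω => (X ω).2
  have card_pos : (0 : ℝ) < Fintype.card β := by exact_mod_cast Fintype.card_pos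
  let T := Finset.univ.image (Prod.fst ∘ X)
  have sum_mass : ∑ a ∈ T, lawMass (Prod.fst ∘ X) a = 1 := by
    simpa using (expect_comp_eq_sum_lawMass_mul (Prod.fst ∘ X) (T := T) (by simp [T])
      fun _ => 1).symm
  calc lawEntropy X
      ≤ 𝔼 ω, -Real.log (lawMass (Prod.fst ∘ X) (X ω).1 / Fintype.card β) := by
        refine lawEntropy_le_expect_neg_log X (T := T ×ˢ Finset.univ)
          (r := fun p => lawMass (Prod.fst ∘ X) p.1 / Fintype.card β) (by simp [T]) ?_ ?_
        · intro p hp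
          obtain ⟨ω, -, hω⟩ := Finset.mem_image.1 (Finset.mem_product.1 hp).1
          exact div_pos (hω ▸ lawMass_apply_pos (Prod.fst ∘ X) ω) card_pos
        · simp [Finset.sum_product, mul_div_cancel₀, card_pos.ne', sum_mass]
    _ = lawEntropy (Prod.fst ∘ X) + Real.log (Fintype.card β) := by
        have log_div (ω : Ω) : -Real.log (lawMass (Prod.fst ∘ X) (X ω).1 / Fintype.card β) =
            -Real.log (lawMass (Prod.fst ∘ X) (X ω).1) + Real.log (Fintype.card β) := by
          have mass_ne : lawMass (Prod.fst ∘ X) (X ω).1 ≠ 0 := (lawMass_apply_pos _ ω).ne'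
          rw [Real.log_div mass_ne card_pos.ne', neg_sub', sub_neg_eq_add]
        simp_rw [log_div, Finset.expect_add_distrib, Fintype.expect_const]
        rfl

end UniformSpace

section Walk

variable {Γ Γ' ι : Type*} [Monoid Γ] [Monoid Γ']

/-- The position after `n` steps of the walk whose increments are picked by the word `w`; for
uniform `w` this is the random walk with uniform steps `s i`. -/
def walkPosition (s : ι → Γ) (n : ℕ) (w : Fin n → ι) : Γ :=
  (List.ofFn fun j => s (w j)).prod

@[simp]
lemma walkPosition_zero (s : ι → Γ) (w : Fin 0 → ι) : walkPosition s 0 w = 1 := by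
  simp [walkPosition]

lemma walkPosition_cons (s : ι → Γ) {n : ℕ} (i : ι) (w : Fin n → ι) :
    walkPosition s (n + 1) (Fin.cons i w) = s i * walkPosition s n w := by
  simp [walkPosition]

lemma walkPosition_append (s : ι → Γ) {m n : ℕ} (v : Fin m → ι) (w : Fin n → ι) :
    walkPosition s (m + n) (Fin.append v w) = walkPosition s m v * walkPosition s n w := by
  simp only [walkPosition]
  rw [← List.prod_append, ← List.ofFn_fin_append]
  congr with j
  cases j using Fin.addCases <;> simp

lemma walkPosition_comp_hom (φ : Γ →* Γ') (s : ι → Γ) (n : ℕ) :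
    walkPosition (φ ∘ s) n = φ ∘ walkPosition s n := by
  ext w
  simp [walkPosition, map_list_prod, List.map_ofFn, Function.comp_def]

variable [Fintype ι]

lemma expect_walkPosition_succ (s : ι → Γ) (n : ℕ) (f : Γ → ℝ) :
    𝔼 w, f (walkPosition s (n + 1) w) = 𝔼 w, 𝔼 i, f (s i * walkPosition s n w) := by
  rw [Finset.expect_comm, ← Finset.expect_product', Finset.univ_product_univ]
  exact (Fintype.expect_equiv (Fin.consEquiv fun _ => ι) _ _ fun p => by
    simp [Fin.consEquiv, walkPosition_cons]).symm

lemma subadditive_lawEntropy_walkPosition [Nonempty ι] (s : ι → Γ) :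
    Subadditive fun n => lawEntropy (walkPosition s n) := by
  intro m n
  have split_word : walkPosition s (m + n) ∘ Fin.appendEquiv m n =
      (fun p : Γ × Γ => p.1 * p.2) ∘ Prod.map (walkPosition s m) (walkPosition s n) := by
    ext p
    exact walkPosition_append s p.1 p.2
  beta_reduce
  rw [← lawEntropy_comp_equiv (Fin.appendEquiv m n), split_word, ← lawEntropy_prodMap]
  exact lawEntropy_comp_le _ _

/-- The Avez entropy of the random walk with uniform steps `s i`: the Fekete limit of its entropy
per step. -/
noncomputable def walkEntropyRate [Nonempty ι] (s : ι → Γ) : ℝ :=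
  (subadditive_lawEntropy_walkPosition s).lim

lemma tendsto_lawEntropy_walkPosition_div [Nonempty ι] (s : ι → Γ) :
    Tendsto (fun n : ℕ => lawEntropy (walkPosition s n) / n) atTop (𝓝 (walkEntropyRate s)) := by
  refine (subadditive_lawEntropy_walkPosition s).tendsto_lim ⟨0, ?_⟩
  rintro _ ⟨n, rfl⟩
  exact div_nonneg (lawEntropy_nonneg _) n.cast_nonneg

lemma tendsto_lawEntropy_walkPosition_prod_div [Finite Γ'] [Nonempty ι] (s : ι → Γ × Γ') :
    Tendsto (fun n : ℕ => lawEntropy (walkPosition s n) / n) atTop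
      (𝓝 (walkEntropyRate (Prod.fst ∘ s))) := by
  have := Fintype.ofFinite Γ'
  have fst_walk (n : ℕ) : walkPosition (Prod.fst ∘ s) n = Prod.fst ∘ walkPosition s n :=
    walkPosition_comp_hom (MonoidHom.fst Γ Γ') s n
  have lower := tendsto_lawEntropy_walkPosition_div (Prod.fst ∘ s)
  have upper := lower.add (tendsto_const_div_atTop_nhds_zero_nat (Real.log (Fintype.card Γ')))
  rw [add_zero] at upper
  refine tendsto_of_tendsto_of_tendsto_of_le_of_le lower upper (fun n => ?_) fun n => ?_
  · beta_reduce
    rw [fst_walk]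
    gcongr
    exact lawEntropy_comp_le _ _
  · beta_reduce
    rw [fst_walk, ← add_div]
    gcongr
    exact lawEntropy_le_lawEntropy_fst_add_log_card _

lemma lawEntropy_walkPosition_mk_ker {G H : Type*} [Group G] [Group H] (φ : G →* H) (s : ι → G)
    (n : ℕ) :
    lawEntropy (walkPosition ((QuotientGroup.mk : G → G ⧸ φ.ker) ∘ s) n) =
      lawEntropy (walkPosition (φ ∘ s) n) := by
  have factor : φ ∘ s = QuotientGroup.kerLift φ ∘ QuotientGroup.mk ∘ s := rfl
  rw [factor, walkPosition_comp_hom,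
    lawEntropy_comp_of_injective _ (QuotientGroup.kerLift_injective φ)]

lemma lawMass_walkPosition_le_of_superharmonic {G : Type*} [Group G] (s : ι → G) {f : G → ℝ}
    (f_nonneg : ∀ g, 0 ≤ f g) (one_le_f : 1 ≤ f 1)
    (hf : ∀ g, 𝔼 i, f ((s i)⁻¹ * g) ≤ f g) (n : ℕ) (g : G) :
    lawMass (walkPosition s n) g ≤ f g := by
  induction n generalizing g with
  | zero =>
    by_cases hg : g = 1
    · exact hg ▸ (lawMass_le_one _ _).trans one_le_f
    · simpa [lawMass, Set.indicator_apply, Ne.symm hg] using f_nonneg g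
  | succ n ih =>
    have first_step : lawMass (walkPosition s (n + 1)) g =
        𝔼 i, lawMass (walkPosition s n) ((s i)⁻¹ * g) := by
      classical
      simp only [lawMass]
      rw [expect_walkPosition_succ, Finset.expect_comm]
      simp only [Set.indicator_apply, Set.mem_singleton_iff, eq_inv_mul_iff_mul_eq,
        Pi.one_apply]
    rw [first_step]
    exact (Finset.expect_le_expect fun i _ => ih _).trans (hf g)

lemma expect_walkPosition_le_of_drift_le [Nonempty ι] (s : ι → Γ) {f : Γ → ℝ} {c : ℝ}
    (f_one : f 1 = 0) (hf : ∀ g, 𝔼 i, f (s i * g) ≤ f g + c) (n : ℕ) :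
    𝔼 w, f (walkPosition s n w) ≤ n * c := by
  induction n with
  | zero => simp [f_one]
  | succ n ih =>
    calc 𝔼 w, f (walkPosition s (n + 1) w)
        ≤ 𝔼 w, (f (walkPosition s n w) + c) := by
          rw [expect_walkPosition_succ]
          exact Finset.expect_le_expect fun w _ => hf _
      _ ≤ (n + 1 : ℕ) * c := by
          rw [Finset.expect_add_distrib, Fintype.expect_const]
          push_cast
          linarith

lemma le_expect_walkPosition_of_le_drift [Nonempty ι] (s : ι → Γ) {f : Γ → ℝ} {c : ℝ}
    (f_one : f 1 = 0) (hf : ∀ g, f g + c ≤ 𝔼 i, f (s i * g)) (n : ℕ) :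
    n * c ≤ 𝔼 w, f (walkPosition s n w) := by
  have neg_drift := expect_walkPosition_le_of_drift_le s (f := -f) (c := -c) (by simp [f_one])
    (fun g => by simpa [Finset.expect_neg_distrib, add_comm] using neg_le_neg (hf g)) n
  simpa using neg_drift

end Walk

section SymmetricSteps

variable {Γ Γ' α : Type*} [Group Γ] [Group Γ']

/-- The symmetric step set `{t a, (t a)⁻¹}`, indexed by the letters of `FreeGroup α`. -/
def symmStep (t : α → Γ) (p : α × Bool) : Γ :=
  bif p.2 then t p.1 else (t p.1)⁻¹

lemma map_comp_symmStep (φ : Γ →* Γ') (t : α → Γ) : φ ∘ symmStep t = symmStep (φ ∘ t) := by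
  ext ⟨a, b⟩
  cases b <;> simp [symmStep]

lemma symmStep_freeGroup_of (p : α × Bool) :
    symmStep (FreeGroup.of : α → FreeGroup α) p = FreeGroup.mk [p] := by
  obtain ⟨a, b⟩ := p
  cases b <;> rfl

lemma expect_symmStep_inv [Fintype α] (t : α → Γ) (f : Γ → ℝ) :
    𝔼 p, f (symmStep t p)⁻¹ = 𝔼 p, f (symmStep t p) := by
  refine Fintype.expect_equiv (Equiv.prodCongr (Equiv.refl α) Equiv.boolNot) _ _ fun p => ?_
  obtain ⟨a, b⟩ := p
  cases b <;> simp [symmStep]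

end SymmetricSteps

section FreeGroupNorm

open FreeGroup (toWord)

variable {α : Type*} [DecidableEq α]

lemma norm_letter_mul (p : α × Bool) (x : FreeGroup α) :
    (FreeGroup.mk [p] * x).norm =
      match toWord x with
      | [] => 1
      | q :: w => if p = (q.1, !q.2) then w.length else w.length + 2 := by
  have word_mul : toWord (FreeGroup.mk [p] * x) = FreeGroup.reduce (p :: toWord x) := by
    conv_lhs => rw [← FreeGroup.mk_toWord (x := x)]
    rw [FreeGroup.mul_mk, FreeGroup.toWord_mk, List.singleton_append]
  rw [FreeGroup.norm, word_mul, FreeGroup.reduce.cons, FreeGroup.reduce_toWord]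
  cases toWord x with
  | nil => rfl
  | cons q w =>
    simp only [Prod.ext_iff]
    split_ifs <;> simp

variable [Fintype α]

lemma sum_comp_norm_letter_mul (F : ℕ → ℝ) (x : FreeGroup α) :
    ∑ p : α × Bool, F ((FreeGroup.mk [p] * x).norm) =
      if x.norm = 0 then 2 * Fintype.card α * F 1
      else (2 * Fintype.card α - 1) * F (x.norm + 1) + F (x.norm - 1) := by
  simp only [norm_letter_mul]
  rw [FreeGroup.norm]
  cases toWord x with
  | nil => simp [mul_comm]
  | cons q w =>
    have split_cancelling (p : α × Bool) :
        F (if p = (q.1, !q.2) then w.length else w.length + 2) =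
          F (w.length + 2) + if p = (q.1, !q.2) then F w.length - F (w.length + 2) else 0 := by
      split_ifs <;> ring
    simp only [split_cancelling, Finset.sum_add_distrib, Finset.sum_ite_eq', Finset.mem_univ,
      if_true, Finset.sum_const, Finset.card_univ, Fintype.card_prod, Fintype.card_bool,
      List.length_cons, Nat.add_sub_cancel, Nat.succ_ne_zero, if_false, nsmul_eq_mul]
    push_cast
    ring

lemma sum_norm_letter_mul_le (x : FreeGroup α) :
    ∑ p : α × Bool, ((FreeGroup.mk [p] * x).norm : ℝ) ≤ 2 * Fintype.card α * (x.norm + 1) := by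
  have letter_le (p : α × Bool) : ((FreeGroup.mk [p] * x).norm : ℝ) ≤ x.norm + 1 := by
    have := (FreeGroup.norm_mul_le (FreeGroup.mk [p]) x).trans
      (Nat.add_le_add_right FreeGroup.norm_mk_le _)
    rw [add_comm]
    exact_mod_cast this
  refine (Finset.sum_le_sum fun p _ => letter_le p).trans_eq ?_
  simp only [Finset.sum_const, Finset.card_univ, Fintype.card_prod, Fintype.card_bool, nsmul_eq_mul]
  push_cast
  ring

lemma le_sum_norm_letter_mul (x : FreeGroup α) :
    2 * Fintype.card α * (x.norm : ℝ) + (2 * Fintype.card α - 2) ≤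
      ∑ p : α × Bool, ((FreeGroup.mk [p] * x).norm : ℝ) := by
  rw [sum_comp_norm_letter_mul fun m => (m : ℝ)]
  rcases x.norm with _ | m
  · simp
  · simp only [Nat.succ_ne_zero, if_false, Nat.add_sub_cancel]
    push_cast
    linarith

lemma sum_inv_pow_norm_letter_mul_le [Nonempty α] (x : FreeGroup α) :
    ∑ p : α × Bool, (2 * Fintype.card α - 1 : ℝ)⁻¹ ^ (FreeGroup.mk [p] * x).norm ≤
      2 * Fintype.card α * (2 * Fintype.card α - 1 : ℝ)⁻¹ ^ x.norm := by
  have one_le_card : (1 : ℝ) ≤ Fintype.card α := by exact_mod_cast Fintype.card_pos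
  have base_pos : (0 : ℝ) < 2 * Fintype.card α - 1 := by linarith
  rw [sum_comp_norm_letter_mul fun m => (2 * Fintype.card α - 1 : ℝ)⁻¹ ^ m]
  rcases x.norm with _ | m
  · simp only [if_true, pow_one, pow_zero]
    gcongr
    exact inv_le_one_of_one_le₀ (by linarith)
  · simp only [Nat.succ_ne_zero, if_false, Nat.add_sub_cancel, pow_succ]
    apply le_of_eq
    field_simp
    ring

lemma card_filter_norm_eq_le (T : Finset (FreeGroup α)) (m : ℕ) :
    (T.filter fun x => x.norm = m).card ≤ (2 * Fintype.card α) ^ m := by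
  have card_words : Fintype.card (List.Vector (α × Bool) m) = (2 * Fintype.card α) ^ m := by
    simp [card_vector, mul_comm]
  rw [← card_words, ← Finset.card_univ]
  refine Finset.card_le_card_of_forall_subsingleton (fun x v => toWord x = v.toList) ?_ ?_
  · intro x hx
    exact ⟨⟨toWord x, (Finset.mem_filter.1 hx).2⟩, Finset.mem_univ _, rfl⟩
  · rintro v - x ⟨-, hx⟩ y ⟨-, hy⟩
    exact FreeGroup.toWord_injective (hx.trans hy.symm)

lemma sum_inv_pow_norm_le [Nonempty α] {T : Finset (FreeGroup α)} {n : ℕ}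
    (hT : ∀ x ∈ T, x.norm ≤ n) :
    ∑ x ∈ T, (2 * Fintype.card α : ℝ)⁻¹ ^ x.norm ≤ n + 1 := by
  have sphere_le (m : ℕ) : ∑ x ∈ T with x.norm = m, (2 * Fintype.card α : ℝ)⁻¹ ^ x.norm ≤ 1 := by
    have sphere_eq : ∑ x ∈ T with x.norm = m, (2 * Fintype.card α : ℝ)⁻¹ ^ x.norm =
        (T.filter fun x => x.norm = m).card • (2 * Fintype.card α : ℝ)⁻¹ ^ m :=
      Finset.sum_eq_card_nsmul fun x hx => by rw [(Finset.mem_filter.1 hx).2]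
    rw [sphere_eq, nsmul_eq_mul, inv_pow, ← div_eq_mul_inv, div_le_one (by positivity)]
    exact_mod_cast card_filter_norm_eq_le T m
  rw [← Finset.sum_fiberwise_of_maps_to (t := Finset.range (n + 1)) (g := FreeGroup.norm)
    fun x hx => Finset.mem_range_succ_iff.2 (hT x hx)]
  simpa using Finset.sum_le_sum fun m (_ : m ∈ Finset.range (n + 1)) => sphere_le m

end FreeGroupNorm

section LazyWalk

variable {k : ℕ}

/-- The steps of the simple random walk on `F_{k+1}` after killing one generator: a walk on `F_k`
that stands still with probability `1 / (k + 1)`. -/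
def lazyStep (k : ℕ) : Fin (k + 1) × Bool → FreeGroup (Fin k) :=
  symmStep (Fin.cons 1 FreeGroup.of)

lemma expect_comp_lazyStep (f : FreeGroup (Fin k) → ℝ) :
    𝔼 p, f (lazyStep k p) =
      (2 * f 1 + ∑ q : Fin k × Bool, f (FreeGroup.mk [q])) / (2 * (k + 1)) := by
  simp_rw [Fintype.expect_eq_sum_div_card, Fintype.sum_prod_type, Fin.sum_univ_succ,
    ← symmStep_freeGroup_of]
  simp [lazyStep, symmStep, two_mul, mul_comm]

lemma norm_lazyStep_le_one (p : Fin (k + 1) × Bool) : (lazyStep k p).norm ≤ 1 := by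
  obtain ⟨i, b⟩ := p
  cases i using Fin.cases <;> cases b <;> simp [lazyStep, symmStep]

lemma norm_walkPosition_lazyStep_le (n : ℕ) (w : Fin n → Fin (k + 1) × Bool) :
    (walkPosition (lazyStep k) n w).norm ≤ n := by
  induction n with
  | zero => simp
  | succ n ih =>
    rw [← Fin.cons_self_tail w, walkPosition_cons]
    have step_le := norm_lazyStep_le_one (w 0)
    have tail_le := ih (Fin.tail w)
    exact (FreeGroup.norm_mul_le _ _).trans (by omega)

lemma expect_norm_lazyStep_mul_le (x : FreeGroup (Fin k)) :
    𝔼 p, ((lazyStep k p * x).norm : ℝ) ≤ x.norm + k / (k + 1) := by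
  have sum_le := sum_norm_letter_mul_le x
  rw [expect_comp_lazyStep (k := k) fun y => ((y * x).norm : ℝ), one_mul,
    div_le_iff₀ (by positivity)]
  field_simp
  rw [Fintype.card_fin] at sum_le
  linarith

lemma le_expect_norm_lazyStep_mul (x : FreeGroup (Fin k)) :
    x.norm + ((k : ℝ) - 1) / (k + 1) ≤ 𝔼 p, ((lazyStep k p * x).norm : ℝ) := by
  have le_sum := le_sum_norm_letter_mul x
  rw [expect_comp_lazyStep (k := k) fun y => ((y * x).norm : ℝ), one_mul,
    le_div_iff₀ (by positivity)]
  field_simp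
  rw [Fintype.card_fin] at le_sum
  linarith

lemma lawMass_walkPosition_lazyStep_le (hk : 1 ≤ k) (n : ℕ) (x : FreeGroup (Fin k)) :
    lawMass (walkPosition (lazyStep k) n) x ≤ (2 * k - 1 : ℝ)⁻¹ ^ x.norm := by
  have : Nonempty (Fin k) := Fin.pos_iff_nonempty.1 hk
  have base_pos : (0 : ℝ) < 2 * k - 1 := by
    have : (1 : ℝ) ≤ k := by exact_mod_cast hk
    linarith
  refine lawMass_walkPosition_le_of_superharmonic (lazyStep k)
    (f := fun y => (2 * k - 1 : ℝ)⁻¹ ^ y.norm) (fun y => by positivity) (by simp) ?_ n x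
  intro y
  have sum_le := sum_inv_pow_norm_letter_mul_le y
  rw [lazyStep, expect_symmStep_inv _ fun z : FreeGroup (Fin k) => (2 * k - 1 : ℝ)⁻¹ ^ (z * y).norm,
    ← lazyStep, expect_comp_lazyStep (k := k) fun z => (2 * k - 1 : ℝ)⁻¹ ^ (z * y).norm, one_mul,
    div_le_iff₀ (by positivity)]
  rw [Fintype.card_fin] at sum_le
  linarith

lemma le_lawEntropy_walkPosition_lazyStep (hk : 1 ≤ k) (n : ℕ) :
    n * (((k : ℝ) - 1) / (k + 1) * Real.log (2 * k - 1)) ≤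
      lawEntropy (walkPosition (lazyStep k) n) := by
  have log_nonneg : 0 ≤ Real.log (2 * k - 1 : ℝ) := by
    have : (1 : ℝ) ≤ k := by exact_mod_cast hk
    exact Real.log_nonneg (by linarith)
  have drift := le_expect_walkPosition_of_le_drift (lazyStep k) (f := fun x => (x.norm : ℝ))
    (by simp) le_expect_norm_lazyStep_mul n
  calc n * (((k : ℝ) - 1) / (k + 1) * Real.log (2 * k - 1))
      ≤ (𝔼 w, ((walkPosition (lazyStep k) n w).norm : ℝ)) * Real.log (2 * k - 1) := by
        rw [← mul_assoc]
        gcongr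
    _ = 𝔼 w, -Real.log ((2 * k - 1 : ℝ)⁻¹ ^ (walkPosition (lazyStep k) n w).norm) := by
        simp [Finset.expect_mul]
    _ ≤ lawEntropy (walkPosition (lazyStep k) n) :=
        expect_neg_log_le_lawEntropy _ (lawMass_walkPosition_lazyStep_le hk n)

lemma lawEntropy_walkPosition_lazyStep_le (hk : 1 ≤ k) (n : ℕ) :
    lawEntropy (walkPosition (lazyStep k) n) ≤
      Real.log (n + 1) + n * (k / (k + 1) * Real.log (2 * k)) := by
  have : Nonempty (Fin k) := Fin.pos_iff_nonempty.1 hk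
  have one_le_k : (1 : ℝ) ≤ k := by exact_mod_cast hk
  have log_nonneg : 0 ≤ Real.log (2 * k : ℝ) := Real.log_nonneg (by linarith)
  let T := Finset.univ.image (walkPosition (lazyStep k) n)
  have sum_le : ∑ x ∈ T, (2 * k : ℝ)⁻¹ ^ x.norm ≤ n + 1 := by
    simpa using sum_inv_pow_norm_le (T := T) (n := n) (by simp [T, norm_walkPosition_lazyStep_le])
  have drift := expect_walkPosition_le_of_drift_le (lazyStep k) (f := fun x => (x.norm : ℝ))
    (by simp) expect_norm_lazyStep_mul_le n
  calc lawEntropy (walkPosition (lazyStep k) n)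
      ≤ 𝔼 w, -Real.log ((2 * k : ℝ)⁻¹ ^ (walkPosition (lazyStep k) n w).norm / (n + 1)) := by
        refine lawEntropy_le_expect_neg_log (walkPosition (lazyStep k) n) (T := T)
          (r := fun x => (2 * k : ℝ)⁻¹ ^ x.norm / (n + 1))
          (fun w => Finset.mem_image_of_mem _ (Finset.mem_univ w)) (fun x _ => by positivity) ?_
        rw [← Finset.sum_div]
        exact div_le_one_of_le₀ sum_le (by positivity)
    _ = 𝔼 w, (Real.log (n + 1) + (walkPosition (lazyStep k) n w).norm * Real.log (2 * k)) := by
        refine Finset.expect_congr rfl fun w _ => ?_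
        rw [Real.log_div (by positivity) (by positivity), Real.log_pow, Real.log_inv]
        ring
    _ = Real.log (n + 1) +
          (𝔼 w, ((walkPosition (lazyStep k) n w).norm : ℝ)) * Real.log (2 * k) := by
        rw [Finset.expect_add_distrib, Fintype.expect_const, Finset.expect_mul]
    _ ≤ Real.log (n + 1) + n * (k / (k + 1) * Real.log (2 * k)) := by
        rw [← mul_assoc]
        gcongr

lemma le_walkEntropyRate_lazyStep (hk : 1 ≤ k) :
    ((k : ℝ) - 1) / (k + 1) * Real.log (2 * k - 1) ≤ walkEntropyRate (lazyStep k) := by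
  refine ge_of_tendsto (tendsto_lawEntropy_walkPosition_div (lazyStep k)) ?_
  filter_upwards [eventually_gt_atTop 0] with n hn
  rw [le_div_iff₀' (by exact_mod_cast hn)]
  exact le_lawEntropy_walkPosition_lazyStep hk n

lemma walkEntropyRate_lazyStep_le (hk : 1 ≤ k) :
    walkEntropyRate (lazyStep k) ≤ k / (k + 1) * Real.log (2 * k) := by
  have log_div_tendsto : Tendsto (fun n : ℕ => Real.log (n + 1) / n) atTop (𝓝 0) := by
    simpa [Function.comp_def] using
      (Real.tendsto_pow_log_div_mul_add_atTop 1 (-1) 1 one_ne_zero).comp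
        (tendsto_natCast_atTop_atTop.comp (tendsto_add_atTop_nat 1))
  have bound_tendsto := log_div_tendsto.add_const (k / (k + 1) * Real.log (2 * k))
  rw [zero_add] at bound_tendsto
  refine le_of_tendsto_of_tendsto (tendsto_lawEntropy_walkPosition_div (lazyStep k))
    bound_tendsto ?_
  filter_upwards [eventually_gt_atTop 0] with n hn
  have n_pos : (0 : ℝ) < n := by exact_mod_cast hn
  rw [div_add' _ _ _ n_pos.ne']
  gcongr
  rw [mul_comm _ (n : ℝ)]
  exact lawEntropy_walkPosition_lazyStep_le hk n

lemma walkEntropyRate_lazyStep_lt (hk : 1 ≤ k) :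
    walkEntropyRate (lazyStep k) < k / (k + 1) * Real.log (2 * k + 1) := by
  have : (0 : ℝ) < k := by exact_mod_cast hk
  refine (walkEntropyRate_lazyStep_le hk).trans_lt ?_
  gcongr
  linarith

lemma mul_log_le_walkEntropyRate_lazyStep (hk : 1 ≤ k) :
    ((k : ℝ) - 1) / (2 * k) * (k / (k + 1) * Real.log (2 * k + 1)) ≤
      walkEntropyRate (lazyStep k) := by
  refine le_trans ?_ (le_walkEntropyRate_lazyStep hk)
  rcases hk.eq_or_lt with rfl | two_le
  · simp
  replace two_le : (2 : ℝ) ≤ k := by exact_mod_cast two_le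
  have le_sq : (2 * k + 1 : ℝ) ≤ (2 * k - 1) ^ 2 := by nlinarith
  have log_le : Real.log (2 * k + 1 : ℝ) ≤ 2 * Real.log (2 * k - 1) := by
    simpa using Real.log_le_log (by linarith) le_sq
  calc ((k : ℝ) - 1) / (2 * k) * (k / (k + 1) * Real.log (2 * k + 1))
      = (k - 1) / (k + 1) * (Real.log (2 * k + 1) / 2) := by field_simp
    _ ≤ (k - 1) / (k + 1) * Real.log (2 * k - 1) := by
      refine mul_le_mul_of_nonneg_left (by linarith) (div_nonneg ?_ ?_) <;> linarith

end LazyWalk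

section WalkMeasure

variable {Ω ι Γ Γ' : Type*} [Fintype Ω] [Fintype ι]

/-- The law of `X` as a measure, when `ω` is uniform on `Ω`. -/
noncomputable def lawMeasure [MeasurableSpace Γ] (X : Ω → Γ) : Measure Γ :=
  (Fintype.card Ω : ENNReal)⁻¹ • ∑ ω, Measure.dirac (X ω)

section MeasurableSpace

variable [MeasurableSpace Γ] [MeasurableSpace Γ']

instance sFinite_lawMeasure (X : Ω → Γ) : SFinite (lawMeasure X) := by
  rw [lawMeasure, ← Measure.sum_fintype]
  infer_instance

lemma lintegral_lawMeasure (X : Ω → Γ) {f : Γ → ENNReal} (hf : Measurable f) :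
    ∫⁻ g, f g ∂lawMeasure X = (Fintype.card Ω : ENNReal)⁻¹ * ∑ ω, f (X ω) := by
  rw [lawMeasure, lintegral_smul_measure, lintegral_finsetSum_measure, smul_eq_mul]
  simp_rw [lintegral_dirac' _ hf]

lemma map_lawMeasure (X : Ω → Γ) {f : Γ → Γ'} (hf : Measurable f) :
    (lawMeasure X).map f = lawMeasure (f ∘ X) := by
  refine Measure.ext_of_lintegral _ fun F hF => ?_
  rw [lintegral_map hF hf, lintegral_lawMeasure X (f := fun g => F (f g)) (hF.comp hf),
    lintegral_lawMeasure _ hF]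
  rfl

lemma lawMeasure_comp_equiv (e : Ω ≃ ι) (X : ι → Γ) : lawMeasure (X ∘ e) = lawMeasure X := by
  rw [lawMeasure, lawMeasure, Fintype.card_congr e]
  exact congrArg _ (e.sum_comp fun i => Measure.dirac (X i))

lemma lawMeasure_prodMap (X : Ω → Γ) (Y : ι → Γ') :
    (lawMeasure X).prod (lawMeasure Y) = lawMeasure (Prod.map X Y) := by
  refine Measure.ext_of_lintegral _ fun f hf => ?_
  rw [lintegral_prod _ hf.aemeasurable, lintegral_lawMeasure X hf.lintegral_prod_right',
    lintegral_lawMeasure _ hf, Fintype.card_prod, Fintype.sum_prod_type, Nat.cast_mul,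
    ENNReal.mul_inv (by simp) (by simp), mul_assoc]
  simp_rw [fun g => lintegral_lawMeasure Y (f := fun g' => f (g, g')) (by fun_prop),
    ← Finset.mul_sum]
  rfl

lemma lawMeasure_real_singleton [MeasurableSingletonClass Γ] (X : Ω → Γ) (g : Γ) :
    (lawMeasure X).real {g} = lawMass X g := by
  have atom (ω : Ω) : (Measure.dirac (X ω) {g}).toReal = ({g} : Set Γ).indicator 1 (X ω) := by
    by_cases hω : X ω = g <;> simp [hω]
  rw [lawMeasure, measureReal_ennreal_smul_apply, measureReal_def, Measure.finsetSum_apply,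
    ENNReal.toReal_sum fun ω _ => measure_ne_top _ _, Finset.sum_congr rfl fun ω _ => atom ω,
    lawMass, Fintype.expect_eq_sum_div_card, div_eq_inv_mul, ENNReal.toReal_inv,
    ENNReal.toReal_natCast]

lemma shannonEntropy_lawMeasure [MeasurableSingletonClass Γ] (X : Ω → Γ) :
    shannonEntropy (lawMeasure X) = lawEntropy X := by
  classical
  let T := Finset.univ.image X
  have mass_eq_zero (g : Γ) (hg : g ∉ T) : lawMass X g = 0 := by
    have avoids (ω : Ω) : X ω ≠ g := fun h => hg (h ▸ Finset.mem_image_of_mem X (Finset.mem_univ ω))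
    simp [lawMass, avoids]
  simp only [shannonEntropy, ← measureReal_def, lawMeasure_real_singleton]
  rw [tsum_eq_sum (s := T) fun g hg => by simp [mass_eq_zero g hg], lawEntropy,
    expect_comp_eq_sum_lawMass_mul X (T := T) (by simp [T]) fun g => -Real.log (lawMass X g)]
  simp

end MeasurableSpace

lemma convPow_lawMeasure [Group Γ] [MeasurableSpace Γ] [MeasurableMul₂ Γ] (s : ι → Γ)
    (n : ℕ) : convPow (lawMeasure s) n = lawMeasure (walkPosition s n) := by
  induction n with
  | zero => simp [convPow, lawMeasure]
  | succ n ih =>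
    have split_word : walkPosition s (n + 1) ∘ Fin.consEquiv (fun _ => ι) =
        (fun p : Γ × Γ => p.1 * p.2) ∘ Prod.map s (walkPosition s n) := by
      ext p
      exact walkPosition_cons s p.1 p.2
    rw [convPow, ih, lawMeasure_prodMap, map_lawMeasure _ measurable_mul, ← split_word,
      lawMeasure_comp_equiv]

lemma quotientWalkEntropy_lawMeasure [Group Γ] [Countable Γ] [MeasurableSpace Γ]
    [MeasurableSingletonClass Γ] (s : ι → Γ) (N : Subgroup Γ) (hN : N.Normal) (n : ℕ) :
    quotientWalkEntropy (lawMeasure s) N hN n =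
      lawEntropy (walkPosition ((QuotientGroup.mk : Γ → Γ ⧸ N) ∘ s) n) := by
  let _ : MeasurableSpace (Γ ⧸ N) := ⊤
  have : Countable (Γ ⧸ N) := QuotientGroup.mk_surjective.countable
  have : DiscreteMeasurableSpace (Γ ⧸ N) := ⟨fun _ => trivial⟩
  rw [quotientWalkEntropy, map_lawMeasure s (measurable_of_countable _), convPow_lawMeasure,
    shannonEntropy_lawMeasure]

end WalkMeasure

section KilledGenerator

variable {k : ℕ}

/-- The homomorphism from `F_{k+1}` that kills the generator `a₀` in the free factor and records
its exponent sum modulo `m`. -/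
def killModExponent (k m : ℕ) :
    FreeGroup (Fin (k + 1)) →* FreeGroup (Fin k) × Multiplicative (ZMod m) :=
  FreeGroup.lift (Fin.cons (1, .ofAdd 1) fun i => (FreeGroup.of i, 1))

lemma killModExponent_of_zero_pow (k m j : ℕ) :
    killModExponent k m (FreeGroup.of 0 ^ j) = (1, .ofAdd (j : ZMod m)) := by
  simp [killModExponent, ← ofAdd_nsmul]

lemma of_zero_pow_mem_ker_killModExponent {m j : ℕ} :
    FreeGroup.of 0 ^ j ∈ (killModExponent k m).ker ↔ m ∣ j := by
  rw [MonoidHom.mem_ker, killModExponent_of_zero_pow, Prod.mk_eq_one, ofAdd_eq_one,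
    ZMod.natCast_eq_zero_iff]
  exact and_iff_right rfl

lemma ker_killModExponent_injective (k : ℕ) :
    Function.Injective fun m => (killModExponent k m).ker := by
  intro m m' h
  have same_powers (j : ℕ) : m ∣ j ↔ m' ∣ j := by
    rw [← of_zero_pow_mem_ker_killModExponent (k := k), ← of_zero_pow_mem_ker_killModExponent]
    exact SetLike.ext_iff.1 h _
  exact Nat.dvd_antisymm ((same_powers m').2 dvd_rfl) ((same_powers m).1 dvd_rfl)

lemma ker_killModExponent_ne_bot (k m : ℕ) [NeZero m] : (killModExponent k m).ker ≠ ⊥ := by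
  intro h
  have pow_eq_one : (FreeGroup.of 0 : FreeGroup (Fin (k + 1))) ^ m = 1 := by
    rw [← Subgroup.mem_bot, ← h, of_zero_pow_mem_ker_killModExponent]
  exact NeZero.ne m (by simpa [FreeGroup.norm_of_pow] using congrArg FreeGroup.norm pow_eq_one)

lemma fst_comp_killModExponent_comp_symmStep (k m : ℕ) :
    Prod.fst ∘ killModExponent k m ∘ symmStep FreeGroup.of = lazyStep k := by
  rw [map_comp_symmStep]
  change MonoidHom.fst _ _ ∘ symmStep _ = _
  rw [map_comp_symmStep, lazyStep]
  congr 1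
  ext i
  cases i using Fin.cases <;> simp [killModExponent]

lemma tendsto_quotientWalkEntropy_killModExponent_div [MeasurableSpace (FreeGroup (Fin (k + 1)))]
    [MeasurableSingletonClass (FreeGroup (Fin (k + 1)))] (m : ℕ) [NeZero m] :
    Tendsto (fun n : ℕ => quotientWalkEntropy (lawMeasure (symmStep FreeGroup.of))
      (killModExponent k m).ker (MonoidHom.normal_ker _) n / n) atTop
      (𝓝 (walkEntropyRate (lazyStep k))) := by
  simp_rw [quotientWalkEntropy_lawMeasure, lawEntropy_walkPosition_mk_ker]
  rw [← fst_comp_killModExponent_comp_symmStep k m]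
  exact tendsto_lawEntropy_walkPosition_prod_div _

end KilledGenerator

lemma lawMeasure_symmStep {Γ α : Type*} [Group Γ] [MeasurableSpace Γ] [Fintype α] (t : α → Γ) :
    lawMeasure (symmStep t) = (2 * (Fintype.card α : ENNReal))⁻¹ •
      ∑ i, (Measure.dirac (t i) + Measure.dirac (t i)⁻¹) := by
  simp [lawMeasure, symmStep, Fintype.sum_prod_type, mul_comm]

/-- Let `d ≥ 2` and let `μ` be the uniform probability measure on a symmetric free
generating set of the free group `F_d`.  Then there is a sequence `(N_i)` of pairwise
distinct nontrivial normal subgroups of `F_d` such that, writing `μ_i` for the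
pushforward of `μ` to `F_d/N_i`, for every `ε > 0` there is `i` with
`h_RW(μ) > h_RW(μ_i) > ((d−2)/(2d−2))·h_RW(μ) − ε`, where
`h_RW(μ) = ((d−1)/d)·log(2d−1)` is the Avez entropy. -/
theorem middle_entropy_quotient_boundaries (d : ℕ) (hd : 2 ≤ d)
    [MeasurableSpace (FreeGroup (Fin d))] [MeasurableSingletonClass (FreeGroup (Fin d))]
    (μ : Measure (FreeGroup (Fin d)))
    (hμ : μ = (2 * (d : ENNReal))⁻¹ •
      ∑ i : Fin d, (Measure.dirac (FreeGroup.of i) + Measure.dirac (FreeGroup.of i)⁻¹)) :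
    ∃ (N : ℕ → Subgroup (FreeGroup (Fin d))) (hN : ∀ i, (N i).Normal),
      Function.Injective N ∧ (∀ i, N i ≠ ⊥) ∧
      ∀ ε : ℝ, 0 < ε → ∃ (i : ℕ) (h : ℝ),
        Tendsto (fun n : ℕ => quotientWalkEntropy μ (N i) (hN i) n / n) atTop (𝓝 h) ∧
        ((d : ℝ) - 1) / d * Real.log (2 * d - 1) > h ∧
        h > ((d : ℝ) - 2) / (2 * d - 2) *
              (((d : ℝ) - 1) / d * Real.log (2 * d - 1)) - ε := by
  obtain ⟨k, rfl⟩ : ∃ k, d = k + 1 := ⟨d - 1, by omega⟩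
  have hk : 1 ≤ k := by omega
  obtain rfl : μ = lawMeasure (symmStep FreeGroup.of) := by
    rw [hμ, lawMeasure_symmStep, Fintype.card_fin]
  refine ⟨fun i => (killModExponent k (i + 1)).ker, fun i => MonoidHom.normal_ker _,
    (ker_killModExponent_injective k).comp (add_left_injective 1),
    fun i => ker_killModExponent_ne_bot k (i + 1), fun ε hε =>
    ⟨0, walkEntropyRate (lazyStep k), tendsto_quotientWalkEntropy_killModExponent_div 1, ?_, ?_⟩⟩
  · exact (walkEntropyRate_lazyStep_lt hk).trans_eq (by push_cast; ring_nf)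
  · refine (sub_lt_self _ hε).trans_le (Eq.trans_le ?_ (mul_log_le_walkEntropyRate_lazyStep hk))
    push_cast
    ring_nf
end
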